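/- For z ∈ (−∞,1) with z ≠ 0 and Re a > 0, Re(c−a) > 0, the sequence f(m) := ∫₀¹ (x(1−x)/(1−zx))^m x^{a−1}(1−x)^{c−a−1}(1−zx)^{−b} dx satisfies f(m) ~ √(2π/m) · (√(1−z))^{c−a−b−1}/((1+√(1−z))^{c−2}) · (√(1−z)/2)^{1/2} · (1+√(1−z)) · (1+√(1−z))^{−2m} as m → ∞; equivalently f(m)·(1+√(1−z))^{2m} · m^{1/2} converges to √(2π)·u(x₀)/√(φ″(x₀)) where x₀ = 1/(1+√(1−z)), u(x)=x^{a−1}(1−x)^{c−a−1}(1−zx)^{−b}, and φ(x) = −log(x(1−x)/(1−zx)). -/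

import Mathlib

open Real Filter Set

lemma laplace_aux (g h : ℝ → ℝ) (u : ℝ → ℂ) (x₀ κ : ℝ) (hκ : 0 < κ) (hx0 : 0 < x₀) (hx1 : x₀ < 1)
    (hg0 : ∀ x ∈ Ioc (0:ℝ) 1, 0 ≤ g x) (hgh : ∀ x ∈ Ioc (0:ℝ) 1, g x = 1 - (x - x₀) ^ 2 * h x)
    (hge : ∀ x ∈ Ioc (0:ℝ) 1, g x ≤ Real.exp (-κ * (x - x₀) ^ 2))
    (hh : ContinuousAt h x₀) (hu : ContinuousAt u x₀)
    (hui : MeasureTheory.IntegrableOn u (Ioc 0 1)) (hgm : Measurable g) (hum : Measurable u) :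
    Tendsto (fun m : ℕ => (Real.sqrt m : ℂ) * ∫ x in (0:ℝ)..1, (g x : ℂ) ^ m * u x) atTop
      (nhds ((Real.sqrt (π / h x₀) : ℂ) * u x₀)) := by
  obtain ⟨δ, hδ, hC⟩ : ∃ δ > 0, ∀ x, |x - x₀| < δ → x ∈ Ioc (0:ℝ) 1 ∧ ‖u x‖ ≤ ‖u x₀‖ + 1 := by
    have h1 : ∀ᶠ x in nhds x₀, ‖u x‖ < ‖u x₀‖ + 1 :=
      hu.norm.eventually_lt continuousAt_const (by linarith)
    have h2 : ∀ᶠ x in nhds x₀, x ∈ Ioc (0:ℝ) 1 := Ioc_mem_nhds hx0 hx1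
    obtain ⟨δ, hδ, H⟩ := Metric.eventually_nhds_iff.1 (h1.and h2)
    refine ⟨δ, hδ, fun x hx => ?_⟩
    have := H (y := x) (by rwa [Real.dist_eq])
    exact ⟨this.2, this.1.le⟩
  set C := ‖u x₀‖ + 1 with hCdef
  set S : Set ℝ := {x | |x - x₀| < δ} with hS
  have hSm : MeasurableSet S := measurableSet_lt (by fun_prop) (by fun_prop)
  have hSsub : S ⊆ Ioc 0 1 := fun x hx => (hC x hx).1
  have hgpow : ∀ x ∈ Ioc (0:ℝ) 1, ∀ m : ℕ, ‖(g x : ℂ) ^ m‖ ≤ Real.exp (-κ * (x - x₀) ^ 2 * m) := by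
    intro x hx m
    rw [norm_pow, Complex.norm_real, Real.norm_of_nonneg (hg0 x hx), mul_comm _ (m:ℝ), Real.exp_nat_mul]
    exact pow_le_pow_left₀ (hg0 x hx) (hge x hx) m
  have hpm : ∀ m : ℕ, Measurable (fun x => (g x : ℂ) ^ m * u x) := fun m => by fun_prop
  have hint : ∀ m : ℕ, MeasureTheory.IntegrableOn (fun x => (g x : ℂ) ^ m * u x) (Ioc 0 1) := by
    intro m
    refine MeasureTheory.Integrable.mono hui (hpm m).aestronglyMeasurable ?_
    filter_upwards [MeasureTheory.ae_restrict_mem measurableSet_Ioc] with x hx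
    rw [norm_mul]
    refine mul_le_of_le_one_left (norm_nonneg _) ((hgpow x hx m).trans ?_)
    rw [Real.exp_le_one_iff]
    have : 0 ≤ κ * (x - x₀) ^ 2 * m := by positivity
    linarith
  have hsplit : ∀ m : ℕ, (∫ x in (0:ℝ)..1, (g x : ℂ) ^ m * u x) =
      (∫ x in S, (g x : ℂ) ^ m * u x) + ∫ x in Ioc (0:ℝ) 1 \ S, (g x : ℂ) ^ m * u x := by
    intro m
    rw [intervalIntegral.integral_of_le zero_le_one]
    rw [← MeasureTheory.setIntegral_union disjoint_sdiff_right (measurableSet_Ioc.diff hSm)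
      ((hint m).mono_set hSsub) ((hint m).mono_set sdiff_subset), union_sdiff_cancel hSsub]
  -- tail
  have htail : Tendsto (fun m : ℕ => (Real.sqrt m : ℂ) *
      ∫ x in Ioc (0:ℝ) 1 \ S, (g x : ℂ) ^ m * u x) atTop (nhds 0) := by
    set r := Real.exp (-κ * δ ^ 2) with hr
    have hr1 : r < 1 := by
      rw [hr, Real.exp_lt_one_iff]
      have : 0 < κ * δ ^ 2 := by positivity
      linarith
    have hlim := (tendsto_pow_const_mul_const_pow_of_lt_one 1 (Real.exp_pos _).le hr1).mul_const
      (∫ x in Ioc (0:ℝ) 1 \ S, ‖u x‖)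
    rw [zero_mul] at hlim
    refine squeeze_zero_norm (fun m => ?_) hlim
    rw [norm_mul, Complex.norm_real, Real.norm_of_nonneg (Real.sqrt_nonneg _), pow_one, mul_assoc]
    refine mul_le_mul ?_ ?_ (norm_nonneg _) (by positivity)
    · rw [Real.sqrt_le_left (by positivity)]
      rcases Nat.eq_zero_or_pos m with h | h
      · simp [h]
      · have : (1:ℝ) ≤ m := by exact_mod_cast h
        nlinarith
    · rw [← MeasureTheory.integral_const_mul]
      refine MeasureTheory.norm_integral_le_of_norm_le
        (((hui.mono_set sdiff_subset).norm).const_mul _) ?_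
      filter_upwards [MeasureTheory.ae_restrict_mem (measurableSet_Ioc.diff hSm)] with x hx
      rw [norm_mul]
      refine mul_le_mul_of_nonneg_right ((hgpow x hx.1 m).trans ?_) (norm_nonneg _)
      rw [← Real.exp_nat_mul, Real.exp_le_exp]
      have h1 : δ ≤ |x - x₀| := not_lt.1 hx.2
      have h2 : δ ^ 2 ≤ (x - x₀) ^ 2 := by rw [← sq_abs (x - x₀)]; gcongr
      have h3 : κ * δ ^ 2 * m ≤ κ * (x - x₀) ^ 2 * m := by gcongr
      linarith
  -- main part
  have hchange : ∀ m : ℕ, (Real.sqrt m : ℂ) * (∫ x in S, (g x : ℂ) ^ m * u x) =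
      ∫ t : ℝ, S.indicator (fun x => (g x : ℂ) ^ m * u x) (x₀ + t / Real.sqrt m) ∨ m = 0 := by
    intro m
    by_cases hm : m = 0
    · exact Or.inr hm
    left
    rw [MeasureTheory.Measure.integral_comp_div
      (fun y => S.indicator (fun x => (g x : ℂ) ^ m * u x) (x₀ + y)),
      MeasureTheory.integral_add_left_eq_self, MeasureTheory.integral_indicator hSm,
      abs_of_nonneg (Real.sqrt_nonneg _), Complex.real_smul]
  have hmain : Tendsto (fun m : ℕ =>
      ∫ t : ℝ, S.indicator (fun x => (g x : ℂ) ^ m * u x) (x₀ + t / Real.sqrt m)) atTop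
      (nhds (∫ t : ℝ, (Real.exp (-h x₀ * t ^ 2) : ℂ) * u x₀)) := by
    refine MeasureTheory.tendsto_integral_filter_of_dominated_convergence
      (fun t => Real.exp (-κ * t ^ 2) * C) ?_ ?_ ((integrable_exp_neg_mul_sq hκ).mul_const _) ?_
    · refine Eventually.of_forall fun m => ?_
      exact (((hpm m).indicator hSm).comp (by fun_prop)).aestronglyMeasurable
    · filter_upwards [eventually_gt_atTop 0] with m hm
      refine Eventually.of_forall fun t => ?_
      have hm' : (0:ℝ) < m := by exact_mod_cast hm
      by_cases hx : x₀ + t / Real.sqrt m ∈ S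
      · rw [indicator_of_mem hx, norm_mul]
        refine mul_le_mul ((hgpow _ (hSsub hx) m).trans (le_of_eq ?_)) (hC _ hx).2 (norm_nonneg _)
          (Real.exp_pos _).le
        congr 1
        rw [add_sub_cancel_left, div_pow, Real.sq_sqrt hm'.le]
        field_simp
      · rw [indicator_of_notMem hx, norm_zero]
        have : 0 ≤ C := by positivity
        positivity
    · refine Eventually.of_forall fun t => ?_
      have hsq : Tendsto (fun m : ℕ => Real.sqrt m) atTop atTop :=
        Real.tendsto_sqrt_atTop.comp tendsto_natCast_atTop_atTop
      have hx : Tendsto (fun m : ℕ => x₀ + t / Real.sqrt m) atTop (nhds x₀) := by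
        simpa using (hsq.const_div_atTop t).const_add x₀
      have hev : ∀ᶠ m : ℕ in atTop, x₀ + t / Real.sqrt m ∈ S := by
        refine hx.eventually (p := fun x => x ∈ S) ?_
        have : ∀ᶠ x in nhds x₀, dist x x₀ < δ := Metric.ball_mem_nhds x₀ hδ
        simpa [Real.dist_eq, hS] using this
      have hpow : Tendsto (fun m : ℕ => (1 + (-(t ^ 2 / m * h (x₀ + t / Real.sqrt m)))) ^ m) atTop
          (nhds (Real.exp (-h x₀ * t ^ 2))) := by
        refine Real.tendsto_one_add_pow_exp_of_tendsto ?_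
        have : Tendsto (fun m : ℕ => -h (x₀ + t / Real.sqrt m) * t ^ 2) atTop
            (nhds (-h x₀ * t ^ 2)) := ((hh.tendsto.comp hx).neg).mul_const _
        refine this.congr' ?_
        filter_upwards [eventually_gt_atTop 0] with m hm
        have hm' : (m:ℝ) ≠ 0 := by exact_mod_cast hm.ne'
        field_simp
      have hpowC := (Complex.continuous_ofReal.tendsto _).comp hpow
      refine (hpowC.mul (hu.tendsto.comp hx)).congr' ?_
      filter_upwards [eventually_gt_atTop 0, hev] with m hm hmS
      rw [indicator_of_mem hmS, hgh _ (hSsub hmS), add_sub_cancel_left, div_pow,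
        Real.sq_sqrt (Nat.cast_nonneg m)]
      simp only [Function.comp]
      push_cast
      ring
  have hval : (∫ t : ℝ, (Real.exp (-h x₀ * t ^ 2) : ℂ) * u x₀) = (Real.sqrt (π / h x₀) : ℂ) * u x₀ := by
    rw [MeasureTheory.integral_mul_const, integral_complex_ofReal, integral_gaussian]
  rw [hval] at hmain
  have := hmain.add htail
  rw [add_zero] at this
  refine this.congr' ?_
  filter_upwards [eventually_gt_atTop 0] with m hm
  rw [hsplit, mul_add, (hchange m).resolve_right hm.ne']



theorem recessive_laplace_asymptotics (z : ℝ) (hz : z < 1) (hz0 : z ≠ 0)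
    (a b c : ℂ) (ha : 0 < a.re) (hca : 0 < (c - a).re) :
    let f : ℕ → ℂ := fun m =>
      ∫ x in (0 : ℝ)..1,
        (((x * (1 - x) / (1 - z * x) : ℝ) : ℂ)) ^ m *
          ((x : ℝ) : ℂ) ^ (a - 1) * (((1 - x : ℝ)) : ℂ) ^ (c - a - 1) *
          (((1 - z * x : ℝ)) : ℂ) ^ (-b)
    let s : ℝ := Real.sqrt (1 - z)
    let u₀ : ℂ := ((s : ℂ)) ^ (c - a - b - 1) / (((1 + s : ℝ) : ℂ)) ^ (c - 2)
    let φ'' : ℝ := 2 * (1 + s) ^ 2 / s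
    Filter.Tendsto
      (fun m : ℕ => f m * (((1 + s : ℝ) : ℂ)) ^ (2 * m) * (Real.sqrt m : ℂ))
      Filter.atTop
      (nhds ((Real.sqrt (2 * Real.pi) : ℂ) * u₀ / (Real.sqrt φ'' : ℂ))) := by

  intro f s u₀ φ''
  have hs : 0 < s := Real.sqrt_pos.2 (by linarith)
  have hss : s ^ 2 = 1 - z := Real.sq_sqrt (by linarith)
  have hzs : z = 1 - s ^ 2 := by linarith
  have hden : ∀ x ∈ Icc (0:ℝ) 1, 0 < 1 - z * x := by
    rintro x ⟨h0, h1⟩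
    rw [hzs]
    rcases eq_or_lt_of_le h0 with h | h
    · rw [← h]; norm_num
    · nlinarith [mul_pos h (pow_pos hs 2)]
  set x₀ : ℝ := 1 / (1 + s) with hx₀
  have hx0 : 0 < x₀ := by positivity
  have hx1 : x₀ < 1 := by rw [hx₀, div_lt_one (by positivity)]; linarith
  have hd0 : 1 - z * x₀ = s := by rw [hx₀, hzs]; field_simp; ring
  have hd1 : 1 - x₀ = s / (1 + s) := by rw [hx₀]; field_simp; ring
  set g : ℝ → ℝ := fun x => (1 + s) ^ 2 * (x * (1 - x) / (1 - z * x)) with hg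
  set h : ℝ → ℝ := fun x => (1 + s) ^ 2 / (1 - z * x) with hh
  set u : ℝ → ℂ := fun x => ((x : ℝ) : ℂ) ^ (a - 1) * (((1 - x : ℝ)) : ℂ) ^ (c - a - 1) *
          (((1 - z * x : ℝ)) : ℂ) ^ (-b) with hu
  have hgh : ∀ x ∈ Ioc (0:ℝ) 1, g x = 1 - (x - x₀) ^ 2 * h x := by
    intro x hx
    have h1 := (hden x ⟨hx.1.le, hx.2⟩).ne'
    have h2 : (1 + s) ^ 2 * (x - x₀) ^ 2 = ((1 + s) * x - 1) ^ 2 := by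
      rw [hx₀]; field_simp
    have h3 : (x - x₀) ^ 2 * h x = ((1 + s) * x - 1) ^ 2 / (1 - z * x) := by
      rw [← h2, hh]; ring
    rw [h3, hg]
    simp only
    rw [eq_sub_iff_add_eq, ← mul_div_assoc, ← add_div, div_eq_one_iff_eq h1, hzs]
    ring
  have hM : 0 < 1 + s ^ 2 := by positivity
  have hgoal := laplace_aux g h u x₀ ((1 + s) ^ 2 / (1 + s ^ 2)) (by positivity) hx0 hx1
    (by
      intro x hx
      have h1 := hden x ⟨hx.1.le, hx.2⟩
      have h2 : 0 ≤ 1 - x := by linarith [hx.2]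
      have h3 := hx.1
      simp only [hg]
      positivity)
    hgh
    (by
      intro x hx
      have h1 := hden x ⟨hx.1.le, hx.2⟩
      rw [hgh x hx]
      have h2 : (1 + s) ^ 2 / (1 + s ^ 2) ≤ h x := by
        simp only [hh]
        gcongr
        rw [hzs]
        nlinarith [hx.1, hx.2, sq_nonneg s]
      have h3 : (x - x₀) ^ 2 * ((1 + s) ^ 2 / (1 + s ^ 2)) ≤ (x - x₀) ^ 2 * h x := by gcongr
      have h4 := Real.add_one_le_exp (-((1 + s) ^ 2 / (1 + s ^ 2)) * (x - x₀) ^ 2)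
      linarith)
    (by
      have : 1 - z * x₀ ≠ 0 := by rw [hd0]; exact hs.ne'
      simp only [hh]
      fun_prop (disch := assumption))
    (by
      have e1 : ((x₀ : ℝ) : ℂ) ∈ Complex.slitPlane := Complex.ofReal_mem_slitPlane.2 hx0
      have e2 : ((1 - x₀ : ℝ) : ℂ) ∈ Complex.slitPlane := Complex.ofReal_mem_slitPlane.2 (by linarith)
      have e3 : ((1 - z * x₀ : ℝ) : ℂ) ∈ Complex.slitPlane :=
        Complex.ofReal_mem_slitPlane.2 (by linarith)
      refine ContinuousAt.mul (ContinuousAt.mul ?_ ?_) ?_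
      · exact ContinuousAt.cpow (by fun_prop) (by fun_prop) e1
      · exact ContinuousAt.cpow (by fun_prop) (by fun_prop) e2
      · exact ContinuousAt.cpow (by fun_prop) (by fun_prop) e3)
    (by
      have hb := Complex.betaIntegral_convergent ha hca
      have hb2 := hb.mul_continuousOn (g := fun x : ℝ => (((1 - z * x : ℝ)) : ℂ) ^ (-b)) (by
        rw [uIcc_of_le zero_le_one]
        refine ContinuousOn.cpow (by fun_prop) (by fun_prop) fun x hx => ?_
        exact Complex.ofReal_mem_slitPlane.2 (hden x hx))
      have hb3 := (intervalIntegrable_iff_integrableOn_Ioc_of_le zero_le_one).1 hb2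
      refine hb3.congr_fun (fun x _ => ?_) measurableSet_Ioc
      simp only [hu]
      push_cast
      rfl)
    (by simp only [hg]; fun_prop)
    (by simp only [hu]; fun_prop)
  have hlim : (Real.sqrt (2 * Real.pi) : ℂ) * u₀ / (Real.sqrt φ'' : ℂ) =
      (Real.sqrt (π / h x₀) : ℂ) * u x₀ := by
    have e1 : u x₀ = u₀ := by
      have hs1 : (0:ℝ) < 1 + s := by positivity
      have hsC : (s : ℂ) ≠ 0 := by exact_mod_cast hs.ne'
      have hs1C : ((1 + s : ℝ) : ℂ) ≠ 0 := by exact_mod_cast hs1.ne'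
      have harg : Complex.arg ((1 + s : ℝ) : ℂ) ≠ π := by
        rw [Complex.arg_ofReal_of_nonneg hs1.le]; exact Real.pi_pos.ne
      simp only [hu, u₀]
      rw [hd0, hd1, hx₀, one_div, div_eq_mul_inv, Complex.ofReal_mul,
        Complex.mul_cpow_ofReal_nonneg hs.le (by positivity), Complex.ofReal_inv,
        Complex.inv_cpow _ _ harg, Complex.inv_cpow _ _ harg, div_eq_mul_inv,
        ← Complex.cpow_neg, ← Complex.cpow_neg, ← Complex.cpow_neg,
        show c - a - b - 1 = (c - a - 1) + (-b) by ring, Complex.cpow_add _ _ hsC,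
        show -(c - 2) = -(a - 1) + -(c - a - 1) by ring, Complex.cpow_add _ _ hs1C]
      ring
    have e2 : Real.sqrt (π / h x₀) = Real.sqrt (2 * π) / Real.sqrt φ'' := by
      rw [← Real.sqrt_div (by positivity)]
      congr 1
      simp only [hh, φ'', hd0]
      field_simp
    rw [e1, e2]
    push_cast
    ring
  rw [hlim]
  refine hgoal.congr fun m => ?_
  simp only [f]
  rw [mul_comm]
  congr 1
  rw [← intervalIntegral.integral_mul_const]
  refine intervalIntegral.integral_congr fun x _ => ?_
  simp only [hg, hu]
  rw [Complex.ofReal_mul, mul_pow, Complex.ofReal_pow, ← pow_mul]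
  ring
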